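/- For θ ∈ ℝ let f_θ(y₁,y₂) = (1/(π√3))·exp(−(2/3)·((y₁−θ)² − (y₁−θ)(y₂−θ/2) + (y₂−θ/2)²)), and for fixed y₁°, g°, ψ ∈ ℝ let k(y₂) = √(3/(4π))·exp(−(3/4)·(g° + y₁°/3 − (2/3)y₂ − ψ)²). Then there exists a constant c ≥ 0 (depending on y₁°, g°, ψ but not on θ) such that for every θ ∈ ℝ: ∫_{g°}^{∞} f_θ(y₁°, y₂)·k(y₂) dy₂ = c · ∫_{g°}^{∞} f_θ(y₁°, y₂) dy₂. -/

import Mathlib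

open MeasureTheory Real

/-- The bivariate normal density with mean `(θ, θ/2)` and covariance `[[1,1/2],[1/2,1]]`. -/
noncomputable def binormal (θ : ℝ) (y₁ y₂ : ℝ) : ℝ :=
  (1 / (π * Real.sqrt 3)) *
    Real.exp (-(2 / 3) * ((y₁ - θ) ^ 2 - (y₁ - θ) * (y₂ - θ / 2) + (y₂ - θ / 2) ^ 2))

/-- For fixed `y₁` the density factors into a function of `θ` and a function of `y₂`. -/
lemma binormal_factor (θ y₁ y₂ : ℝ) : binormal θ y₁ y₂ =
    ((1 / (π * Real.sqrt 3)) * Real.exp (-(2 / 3) * ((y₁ - θ) ^ 2 + θ ^ 2 / 4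
      + (y₁ - θ) * (θ / 2) - y₁ ^ 2 / 4))) * Real.exp (-(2 / 3) * (y₂ - y₁ / 2) ^ 2) := by
  unfold binormal
  rw [mul_assoc, ← Real.exp_add]
  congr 2
  ring

lemma integral_h_pos (y₁ g : ℝ) :
    0 < ∫ y in Set.Ioi g, Real.exp (-(2 / 3) * (y - y₁ / 2) ^ 2) := by
  have hi : Integrable (fun y : ℝ => Real.exp (-(2 / 3) * (y - y₁ / 2) ^ 2)) :=
    (integrable_exp_neg_mul_sq (b := 2 / 3) (by norm_num)).comp_sub_right (y₁ / 2)
  rw [integral_pos_iff_support_of_nonneg (fun y => (Real.exp_pos _).le) hi.integrableOn]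
  have : Function.support (fun y : ℝ => Real.exp (-(2 / 3) * (y - y₁ / 2) ^ 2)) = Set.univ := by
    ext y
    simp [Real.exp_ne_zero]
  rw [this]
  simp

/-- **Example 4.1** (Lu–Copas), likelihood ignorability: for the coarse observation
`z = {y₁°} × (g°, ∞)` with coarsening density
`k(y₂) = √(3/(4π)) exp(-(3/4)(g° + y₁°/3 - (2/3)y₂ - ψ)²)`, the observed-data likelihood in
`θ` is proportional to the one obtained by ignoring the censoring mechanism. -/
theorem censoring_lig (y₁o go ψ : ℝ) :
    ∃ c : ℝ, 0 ≤ c ∧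
      ∀ θ : ℝ,
        (∫ y₂ in Set.Ioi go,
            binormal θ y₁o y₂ *
              (Real.sqrt (3 / (4 * π)) *
                Real.exp (-(3 / 4) * (go + y₁o / 3 - (2 / 3) * y₂ - ψ) ^ 2)))
          = c * ∫ y₂ in Set.Ioi go, binormal θ y₁o y₂ := by
  have hp := integral_h_pos y₁o go
  refine ⟨(∫ y in Set.Ioi go, Real.exp (-(2 / 3) * (y - y₁o / 2) ^ 2) *
      (Real.sqrt (3 / (4 * π)) *
        Real.exp (-(3 / 4) * (go + y₁o / 3 - (2 / 3) * y - ψ) ^ 2))) /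
      ∫ y in Set.Ioi go, Real.exp (-(2 / 3) * (y - y₁o / 2) ^ 2), ?_, ?_⟩
  · exact div_nonneg (integral_nonneg fun y => by positivity) hp.le
  · intro θ
    simp only [binormal_factor]
    generalize (1 / (π * Real.sqrt 3)) * Real.exp (-(2 / 3) * ((y₁o - θ) ^ 2 + θ ^ 2 / 4
      + (y₁o - θ) * (θ / 2) - y₁o ^ 2 / 4)) = K
    simp only [mul_assoc K]
    rw [integral_const_mul, integral_const_mul, mul_left_comm, div_mul_cancel₀ _ hp.ne']
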